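/- arXiv:2008.10113 — 2 statements merged into one kernel-verified Lean document; each statement's English description precedes it below -/
import Mathlib

section
/- Let $F$ be a dyadic local field with $e = \mathrm{ord}(2)$. If $a \in F^\times$ is not a square, then there exists $b \in F^\times$ with $d(b) = 2e - d(a)$ such that $(a,b)_{\mathfrak{p}} = -1$. Moreover, if $d(a) < 2e$, then $b$ can be chosen to be a unit of $\mathcal{O}$. -/
noncomputable section

/-- A normalized additive `ℤ`-valued valuation presenting `F` as a dyadic local field
(`F` is a finite extension of `ℚ₂` and `ord` its normalized valuation). -/
structure IsDyadicOrd {F : Type*} [Field F] [Algebra ℚ_[2] F] (ord : F → WithTop ℤ) : Prop where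
  map_zero : ord 0 = ⊤
  ne_top : ∀ x : F, x ≠ 0 → ord x ≠ ⊤
  map_mul : ∀ x y : F, ord (x * y) = ord x + ord y
  min_le_add : ∀ x y : F, min (ord x) (ord y) ≤ ord (x + y)
  surj : ∀ n : ℤ, ∃ x : F, ord x = (n : WithTop ℤ)
  compat : ∀ q : ℚ_[2], q ≠ 0 → q.valuation = 0 → ord (algebraMap ℚ_[2] F q) = 0

/-- The order of the relative quadratic defect `d(a) = ord (a⁻¹ 𝔡(a))`, where
`𝔡(a) = ⋂ₓ (a - x²)𝒪` is the quadratic defect; it is valued in `ℕ∞`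
(`d(a) ≥ 0` always, and `d(a) = ⊤` iff `𝔡(a) = 0`, i.e. `a` is a square). -/
def ddefect {F : Type*} [Field F] (ord : F → WithTop ℤ) (a : F) : ℕ∞ :=
  ⨆ x : F, WithTop.map Int.toNat (ord (a⁻¹ * (a - x ^ 2)))

/-- `d(a)` viewed in `WithTop ℤ`. -/
def dz {F : Type*} [Field F] (ord : F → WithTop ℤ) (a : F) : WithTop ℤ :=
  WithTop.map (Nat.cast : ℕ → ℤ) (ddefect ord a)

/-- The Hilbert symbol `(a,b)_𝔭 = 1` iff `z² = a x² + b y²` has a nontrivial solution. -/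
def hilbertSym (F : Type*) [Field F] (a b : F) : ℤ :=
  @ite _ (∃ x y z : F, (x, y, z) ≠ (0, 0, 0) ∧ a * x ^ 2 + b * y ^ 2 = z ^ 2)
    (Classical.propDecidable _) 1 (-1)

/-!
Let `ρ` be integral with `X² - X + ρ` irreducible over the residue field. The norm form
`x² - xy + ρy²` of the unramified quadratic extension then has order `2 min (ord x) (ord y)`, and
this parity obstructs solutions of `a x² + b y² = z²` in two situations: for `b = 1 - 4ρ` and `a`
of odd order, and for `a = 1 + α`, `b = 1 + β` with `αβ = 4ρ` and `ord α` odd between `0` and `2e`,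
because `β (z² - (x + y)²)` is the norm form at `(βy, 2x)` on solutions.

An approximation of `a` by squares of best possible order, together with the local square theorem,
shows that modulo squares every nonsquare either has odd order, or is `1 + α` with `ord α` odd
between `0` and `2e`, or is `1 - 4r` with `r` of the same kind as `ρ`. The defects `d(a)` are `0`,
`ord α` and `2e` respectively, and one takes for `b` the unit `1 - 4ρ`, the unit `1 + 4ρ/α`, and
an element of order `1`.
-/

theorem coe_ne_two_nsmul_of_odd {n : ℤ} (hn : Odd n) (t : WithTop ℤ) :
    (n : WithTop ℤ) ≠ 2 • t := by
  cases t with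
  | top => simp [two_nsmul]
  | coe t =>
    rw [← WithTop.coe_nsmul, Ne, WithTop.coe_inj]
    grind

theorem eq_top_of_odd_add_two_nsmul {n : ℤ} (hn : Odd n) {s t : WithTop ℤ}
    (h : n + 2 • t = 2 • s) : s = ⊤ ∧ t = ⊤ := by
  cases s <;> cases t <;>
    simp only [two_nsmul, ← WithTop.coe_add, WithTop.add_top, WithTop.coe_ne_top,
      WithTop.top_ne_coe, WithTop.coe_inj, and_self] at h ⊢
  grind

theorem eq_top_of_add_two_nsmul_add_min_le {m e : ℤ} (hm : 0 < m) (hme : m < 2 * e)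
    {s t : WithTop ℤ} (h : m + 2 • (e + min s t) ≤ 2 • min (m + t) (e + s)) : s = ⊤ ∧ t = ⊤ := by
  cases s <;> cases t <;>
    simp only [two_nsmul, ← WithTop.coe_add, ← WithTop.coe_min, WithTop.add_top, min_top_left,
      min_top_right, WithTop.coe_le_coe, WithTop.coe_ne_top, and_self, and_true, and_false]
        at h ⊢ <;>
    omega

section NormForm

variable {F : Type*} [Field F] {v : AddValuation F (WithTop ℤ)}

theorem exists_map_eq_coe (v : AddValuation F (WithTop ℤ)) {x : F} (hx : x ≠ 0) :
    ∃ n : ℤ, v x = n := by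
  obtain ⟨n, hn⟩ := WithTop.ne_top_iff_exists.1 (v.ne_top_iff.2 hx)
  exact ⟨n, hn.symm⟩

theorem ne_zero_of_map_eq_coe {x : F} {n : ℤ} (hx : v x = n) : x ≠ 0 :=
  v.ne_top_iff.1 (hx ▸ WithTop.coe_ne_top)

theorem map_two_nonneg (v : AddValuation F (WithTop ℤ)) : 0 ≤ v 2 := by
  simpa only [v.map_one, min_self, one_add_one_eq_two] using v.map_add 1 1

theorem map_four_nonneg (v : AddValuation F (WithTop ℤ)) : 0 ≤ v 4 := by
  rw [show (4 : F) = 2 ^ 2 by norm_num, v.map_pow]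
  exact nsmul_nonneg (map_two_nonneg v) 2

theorem map_four_eq_coe {e : ℤ} (he : v 2 = e) : v 4 = (2 * e : ℤ) := by
  rw [show (4 : F) = 2 ^ 2 by norm_num, v.map_pow, he, ← WithTop.coe_nsmul, two_nsmul, two_mul]

theorem lt_map_div_iff {x y : F} (hy : y ≠ 0) {γ : WithTop ℤ} : γ < v (x / y) ↔ γ + v y < v x := by
  rw [← WithTop.add_lt_add_iff_right (v.ne_top_iff.2 hy), ← v.map_mul, div_mul_cancel₀ x hy]

theorem map_div_le_map_div_right {x y : F} (h : v x ≤ v y) (z : F) : v (x / z) ≤ v (y / z) := by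
  simp only [div_eq_mul_inv, v.map_mul]
  gcongr

theorem map_div_nonneg {x y : F} (hy : y ≠ 0) (h : v y ≤ v x) : 0 ≤ v (x / y) := by
  rw [← v.map_one, ← div_self hy]
  exact map_div_le_map_div_right h y

/-- `X² - X + ρ` stays irreducible over the residue field, so that its roots generate the
unramified quadratic extension; this is encoded by requiring unit values at integral elements. -/
def IsArtinSchreierInert (v : AddValuation F (WithTop ℤ)) (ρ : F) : Prop :=
  ∀ s, 0 ≤ v s → v (s ^ 2 - s + ρ) = 0

theorem IsArtinSchreierInert.map_eq_zero {ρ : F} (hρ : IsArtinSchreierInert v ρ) : v ρ = 0 := by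
  simpa using hρ 0 (by simp)

theorem IsArtinSchreierInert.map_normForm {ρ : F} (hρ : IsArtinSchreierInert v ρ) (x y : F) :
    v (x ^ 2 - x * y + ρ * y ^ 2) = 2 • min (v x) (v y) := by
  obtain rfl | hy := eq_or_ne y 0
  · simp
  obtain hyx | hxy := le_or_gt (v y) (v x)
  · rw [min_eq_right hyx, ← v.map_pow, ← zero_add (v (y ^ 2)), ← hρ _ (map_div_nonneg hy hyx),
      ← v.map_mul]
    congr 1
    field_simp
  · have le_map_sub : v x ≤ v (x - ρ * y) := by
      refine v.map_le_sub le_rfl ?_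
      rw [v.map_mul, hρ.map_eq_zero, zero_add]
      exact hxy.le
    have sq_dominates : v (x ^ 2) < v (y * (x - ρ * y)) := by
      rw [v.map_pow, v.map_mul, two_nsmul]
      exact WithTop.add_lt_add_of_lt_of_le hxy.ne_top hxy le_map_sub
    rw [min_eq_left hxy.le, ← v.map_pow, ← v.map_sub_eq_of_lt_left sq_dominates]
    congr 1
    ring

theorem map_sq_sub_sq (v : AddValuation F (WithTop ℤ)) (z u : F) :
    v (z ^ 2 - u ^ 2) = 2 • v (z - u) ∨ 2 • v (2 * u) ≤ v (z ^ 2 - u ^ 2) := by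
  have factor : z ^ 2 - u ^ 2 = (z - u) * (2 * u + (z - u)) := by ring
  rw [factor, v.map_mul, two_nsmul, two_nsmul]
  obtain h | h := lt_or_ge (v (z - u)) (v (2 * u))
  · exact .inl (by rw [v.map_add_eq_of_lt_right h])
  · exact .inr (add_le_add h (v.map_le_add le_rfl h))

end NormForm

section Hilbert

variable {F : Type*} [Field F] {v : AddValuation F (WithTop ℤ)}

theorem hilbertSym_eq_neg_one_iff {a b : F} : hilbertSym F a b = -1 ↔
    ∀ x y z : F, a * x ^ 2 + b * y ^ 2 = z ^ 2 → x = 0 ∧ y = 0 ∧ z = 0 := by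
  unfold hilbertSym
  split_ifs with h
  · obtain ⟨x, y, z, hne, heq⟩ := h
    exact iff_of_false (by decide) fun h ↦ hne (by simp [h x y z heq])
  · push Not at h
    refine iff_of_true rfl fun x y z heq ↦ ?_
    by_contra hne
    exact h x y z (by simpa using hne) heq

theorem hilbertSym_comm (a b : F) : hilbertSym F a b = hilbertSym F b a := by
  have swap {a b : F} : (∃ x y z : F, (x, y, z) ≠ (0, 0, 0) ∧ a * x ^ 2 + b * y ^ 2 = z ^ 2) →
      ∃ x y z : F, (x, y, z) ≠ (0, 0, 0) ∧ b * x ^ 2 + a * y ^ 2 = z ^ 2 :=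
    fun ⟨x, y, z, hne, heq⟩ ↦ ⟨y, x, z, by simpa [and_left_comm] using hne, by rw [add_comm, heq]⟩
  unfold hilbertSym
  congr 1
  exact propext ⟨swap, swap⟩

theorem hilbertSym_sq_mul_eq_neg_one {a b c : F} (hc : c ≠ 0) (h : hilbertSym F a b = -1) :
    hilbertSym F (c ^ 2 * a) b = -1 := by
  rw [hilbertSym_eq_neg_one_iff] at h ⊢
  intro x y z heq
  obtain ⟨hx, hy, hz⟩ := h (c * x) y z (by rw [← heq]; ring)
  exact ⟨(mul_eq_zero_iff_left hc).1 hx, hy, hz⟩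

theorem IsArtinSchreierInert.hilbertSym_one_sub_four_mul {ρ : F} (hρ : IsArtinSchreierInert v ρ)
    (h2 : (2 : F) ≠ 0) {a : F} {n : ℤ} (ha : v a = n) (hn : Odd n) :
    hilbertSym F a (1 - 4 * ρ) = -1 := by
  refine hilbertSym_eq_neg_one_iff.2 fun x y z heq ↦ ?_
  have norm_eq : (z + y) ^ 2 - (z + y) * (2 * y) + ρ * (2 * y) ^ 2 = a * x ^ 2 := by
    linear_combination -heq
  have map_eq := congr(v $norm_eq)
  rw [hρ.map_normForm, v.map_mul a, v.map_pow, ha] at map_eq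
  obtain ⟨hzy, hx⟩ := eq_top_of_odd_add_two_nsmul hn map_eq.symm
  obtain ⟨hzy, hy⟩ := min_eq_top.1 hzy
  simp only [AddValuation.top_iff, mul_eq_zero, h2, false_or] at hx hy hzy
  subst hy
  exact ⟨hx, rfl, by simpa using hzy⟩

theorem IsArtinSchreierInert.hilbertSym_one_add_one_add {ρ : F} (hρ : IsArtinSchreierInert v ρ)
    {e : ℤ} (he : v 2 = e) {α β : F} (hαβ : α * β = 4 * ρ) {m : ℤ} (hβ : v β = m) (hm : Odd m)
    (hm0 : 0 < m) (hme : m < 2 * e) : hilbertSym F (1 + α) (1 + β) = -1 := by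
  refine hilbertSym_eq_neg_one_iff.2 fun x y z heq ↦ ?_
  have norm_eq : (β * y) ^ 2 - (β * y) * (2 * x) + ρ * (2 * x) ^ 2 = β * (z ^ 2 - (x + y) ^ 2) := by
    linear_combination β * heq - x ^ 2 * hαβ
  have map_eq := congr(v $norm_eq)
  simp only [hρ.map_normForm, v.map_mul, hβ, he] at map_eq
  have hxy : v x = ⊤ ∧ v y = ⊤ := by
    obtain h | h := map_sq_sub_sq v z (x + y)
    · rw [h] at map_eq
      simpa [and_comm] using (eq_top_of_odd_add_two_nsmul hm map_eq.symm).1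
    · refine eq_top_of_add_two_nsmul_add_min_le hm0 hme
        (map_eq.symm ▸ add_le_add_right (le_trans ?_ h) _)
      rw [v.map_mul, he]
      gcongr
      exact v.map_add x y
  simp only [AddValuation.top_iff] at hxy
  obtain ⟨rfl, rfl⟩ := hxy
  exact ⟨rfl, rfl, by simpa using heq.symm⟩

end Hilbert

section Defect

variable {F : Type*} [Field F]

theorem ddefect_sq_mul (ord : F → WithTop ℤ) {c : F} (hc : c ≠ 0) (a : F) :
    ddefect ord (c ^ 2 * a) = ddefect ord a := by
  refine ((Equiv.mulLeft₀ c hc).iSup_congr fun x ↦ ?_).symm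
  rw [Equiv.mulLeft₀_apply, mul_pow, ← mul_sub, mul_inv, mul_mul_mul_comm,
    inv_mul_cancel₀ (pow_ne_zero 2 hc), one_mul]

variable {v : AddValuation F (WithTop ℤ)}

theorem ddefect_eq_natCast {a : F} (ha : a ≠ 0) {n : ℕ} (hle : ∀ x, v (a - x ^ 2) ≤ v a + (n : ℤ))
    {x : F} (hx : v (a - x ^ 2) = v a + (n : ℤ)) : ddefect v a = n := by
  have map_a (y : F) : v a + v (a⁻¹ * (a - y ^ 2)) = v (a - y ^ 2) := by
    rw [← v.map_mul, mul_inv_cancel_left₀ ha]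
  have greatest : IsGreatest (Set.range fun y ↦ v (a⁻¹ * (a - y ^ 2))) (n : ℤ) := by
    refine ⟨⟨x, ?_⟩, ?_⟩
    · exact (WithTop.add_left_inj (v.ne_top_iff.2 ha)).1 ((map_a x).trans hx)
    · rintro _ ⟨y, rfl⟩
      exact (WithTop.add_le_add_iff_left (v.ne_top_iff.2 ha)).1 ((map_a y).trans_le (hle y))
  have mono : Monotone (WithTop.map Int.toNat) :=
    WithTop.monotone_map_iff.2 fun _ _ ↦ Int.toNat_le_toNat
  have sup_eq := (mono.map_isGreatest greatest).isLUB.sSup_eq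
  rwa [← Set.range_comp] at sup_eq

theorem map_sub_sq_of_odd {a : F} {n : ℤ} (ha : v a = n) (hn : Odd n) (x : F) :
    v (a - x ^ 2) = min (v a) (v (x ^ 2)) := by
  rw [sub_eq_add_neg, ← v.map_neg (x ^ 2)]
  refine v.map_add_of_distinct_val ?_
  rw [v.map_neg, ha, v.map_pow]
  exact coe_ne_two_nsmul_of_odd hn _

theorem ddefect_eq_zero_of_odd {a : F} {n : ℤ} (ha : v a = n) (hn : Odd n) : ddefect v a = 0 := by
  refine ddefect_eq_natCast (n := 0) (x := 0) (ne_zero_of_map_eq_coe ha) (fun x ↦ ?_) (by simp)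
  rw [map_sub_sq_of_odd ha hn]
  simp

theorem map_one_add_of_pos {α : F} (hα : 0 < v α) : v (1 + α) = 0 := by
  rw [v.map_add_eq_of_lt_left (by rwa [v.map_one]), v.map_one]

theorem ddefect_one_add {e : ℤ} (he : v 2 = e) {β : F} {m : ℕ} (hβ : v β = (m : ℤ)) (hm : Odd m)
    (hme : m < 2 * e) : ddefect v (1 + β) = m := by
  have map_eq : v (1 + β) = 0 := map_one_add_of_pos (hβ ▸ mod_cast hm.pos)
  refine ddefect_eq_natCast (x := 1) (ne_zero_of_map_eq_coe (n := 0) map_eq) (fun x ↦ ?_)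
    (by simp [hβ, map_eq])
  have distinct : v β ≠ v (x ^ 2 - 1 ^ 2) := by
    rw [hβ]
    obtain h | h := map_sq_sub_sq v x 1
    · rw [h]
      exact coe_ne_two_nsmul_of_odd (mod_cast hm) _
    · refine ne_of_lt (lt_of_lt_of_le ?_ h)
      rw [mul_one, he, ← WithTop.coe_nsmul, WithTop.coe_lt_coe]
      simpa using hme
  rw [map_eq, zero_add, show 1 + β - x ^ 2 = β - (x ^ 2 - 1 ^ 2) by ring, sub_eq_add_neg,
    v.map_add_of_distinct_val (by rwa [v.map_neg]), ← hβ]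
  exact min_le_left _ _

theorem IsArtinSchreierInert.map_one_sub_four_mul_sub_sq {ρ : F} (hρ : IsArtinSchreierInert v ρ)
    (x : F) : v (1 - 4 * ρ - x ^ 2) = 2 • min (v (x + 1)) (v 2) := by
  rw [← hρ.map_normForm, ← v.map_neg]
  congr 1
  ring

theorem IsArtinSchreierInert.map_one_sub_four_mul {ρ : F} (hρ : IsArtinSchreierInert v ρ) :
    v (1 - 4 * ρ) = 0 := by
  simpa [map_two_nonneg v] using hρ.map_one_sub_four_mul_sub_sq 0

theorem IsArtinSchreierInert.ddefect_one_sub_four_mul {ρ : F} (hρ : IsArtinSchreierInert v ρ)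
    {e : ℕ} (he : v 2 = (e : ℤ)) : ddefect v (1 - 4 * ρ) = 2 * e := by
  have map_eq : v (1 - 4 * ρ) = 0 := hρ.map_one_sub_four_mul
  have two_nsmul_map_two : 2 • v 2 = ((2 * e : ℕ) : ℤ) := by
    rw [he, ← WithTop.coe_nsmul, nsmul_eq_mul, Nat.cast_mul]
  have cast_eq : (2 * e : ℕ∞) = (2 * e : ℕ) := by norm_cast
  rw [cast_eq]
  refine ddefect_eq_natCast (x := -1) (ne_zero_of_map_eq_coe (n := 0) map_eq) (fun x ↦ ?_) ?_
  · rw [hρ.map_one_sub_four_mul_sub_sq, map_eq, zero_add, ← two_nsmul_map_two]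
    gcongr
    exact min_le_right _ _
  · rw [hρ.map_one_sub_four_mul_sub_sq, map_eq, zero_add, ← two_nsmul_map_two, neg_add_cancel,
      v.map_zero, min_eq_right le_top]

end Defect

/-- The properties of the normalized valuation of a dyadic local field from which the theorem
follows: Hensel's lemma for `X² - X + r` (`root`), perfectness of the residue field (`sqrt`) and
existence of a quadratic Artin–Schreier extension of the residue field (`inert`). The last two
force residue characteristic two: if `2` were a unit, the residue of `1 - 4ρ` would have no square
root. -/
structure IsDyadicHenselian {F : Type*} [Field F] (v : AddValuation F (WithTop ℤ)) : Prop where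
  surj : ∀ n : ℤ, ∃ x : F, v x = n
  root : ∀ r, 0 < v r → ∃ s, s ^ 2 - s + r = 0
  sqrt : ∀ u, 0 ≤ v u → ∃ c, 0 < v (u - c ^ 2)
  inert : ∃ ρ, IsArtinSchreierInert v ρ

section SquareClasses

variable {F : Type*} [Field F] {v : AddValuation F (WithTop ℤ)}

theorem IsDyadicHenselian.isSquare_one_add (hv : IsDyadicHenselian v) {α : F} (hα : v 4 < v α) :
    IsSquare (1 + α) := by
  have four_ne : (4 : F) ≠ 0 := v.ne_top_iff.1 hα.ne_top
  have quarter_pos : 0 < v (α / 4) := (lt_map_div_iff four_ne).2 (by rwa [zero_add])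
  obtain ⟨s, hs⟩ := hv.root (-(α / 4)) (by rwa [v.map_neg])
  refine ⟨1 - 2 * s, ?_⟩
  linear_combination (-4) * hs - mul_div_cancel₀ α four_ne

theorem IsDyadicHenselian.isSquare_of_lt_map_sub_sq (hv : IsDyadicHenselian v) {a x : F}
    (hx : v a + v 4 < v (a - x ^ 2)) : IsSquare a := by
  have lt_map_sub : v a < v (x ^ 2 - a) := by
    rw [v.map_sub_swap]
    exact (le_add_of_nonneg_right (map_four_nonneg v)).trans_lt hx
  have map_eq : v (x ^ 2) = v a := v.map_eq_of_lt_sub lt_map_sub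
  have sq_ne : x ^ 2 ≠ 0 := v.ne_top_iff.1 (map_eq ▸ lt_map_sub.ne_top)
  have isSquare : IsSquare (1 + (a - x ^ 2) / x ^ 2) :=
    hv.isSquare_one_add ((lt_map_div_iff sq_ne).2 (by rwa [map_eq, add_comm]))
  have factor : a = x ^ 2 * (1 + (a - x ^ 2) / x ^ 2) := by
    rw [mul_add, mul_div_cancel₀ _ sq_ne]
    ring
  exact factor ▸ (IsSquare.sq x).mul isSquare

theorem IsDyadicHenselian.exists_lt_map_sub_sq (hv : IsDyadicHenselian v) {a : F} {k : ℤ}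
    (ha : v a = (2 * k : ℤ)) : ∃ t, v a < v (a - t ^ 2) := by
  obtain ⟨π, hπ⟩ := hv.surj k
  have sq_ne : π ^ 2 ≠ 0 := pow_ne_zero 2 (ne_zero_of_map_eq_coe hπ)
  have map_sq : v (π ^ 2) = v a := by
    rw [v.map_pow, hπ, ha, ← WithTop.coe_nsmul, nsmul_eq_mul, Nat.cast_ofNat]
  obtain ⟨c, hc⟩ := hv.sqrt _ (map_div_nonneg sq_ne map_sq.le)
  refine ⟨π * c, ?_⟩
  rwa [← mul_div_cancel_left₀ (c ^ 2) sq_ne, ← sub_div, ← mul_pow, lt_map_div_iff sq_ne, zero_add,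
    map_sq] at hc

theorem IsDyadicHenselian.exists_forall_map_sub_sq_le (hv : IsDyadicHenselian v) {e : ℤ}
    (he : v 2 = e) {a : F} (hns : ¬ IsSquare a) : ∃ x, ∀ y, v (a - y ^ 2) ≤ v (a - x ^ 2) := by
  have sub_sq_ne (y : F) : a - y ^ 2 ≠ 0 :=
    sub_ne_zero.2 fun h ↦ hns (h ▸ IsSquare.sq y)
  obtain ⟨n, hn⟩ := exists_map_eq_coe v (by simpa using sub_sq_ne 0 : a ≠ 0)
  obtain ⟨m, ⟨x, hx⟩, hmax⟩ := Int.exists_greatest_of_bdd (P := fun m ↦ ∃ x, v (a - x ^ 2) = m)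
    ⟨n + 2 * e, fun m ⟨x, hx⟩ ↦ by
      have map_le := not_lt.1 (mt (hv.isSquare_of_lt_map_sub_sq (x := x)) hns)
      rwa [hx, hn, map_four_eq_coe he, ← WithTop.coe_add, WithTop.coe_le_coe] at map_le⟩
    ((exists_map_eq_coe v (sub_sq_ne 0)).imp fun _ ↦ .intro 0)
  refine ⟨x, fun y ↦ ?_⟩
  obtain ⟨k, hk⟩ := exists_map_eq_coe v (sub_sq_ne y)
  rw [hx, hk, WithTop.coe_le_coe]
  exact hmax k ⟨y, hk⟩

theorem IsDyadicHenselian.exists_eq_sq_mul_one_add (hv : IsDyadicHenselian v) {e : ℤ}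
    (he : v 2 = e) {a : F} (hns : ¬ IsSquare a) {k : ℤ} (ha : v a = (2 * k : ℤ)) :
    ∃ c α : F, c ≠ 0 ∧ a = c ^ 2 * (1 + α) ∧ 0 < v α ∧ ∀ y, v (1 + α - y ^ 2) ≤ v α := by
  obtain ⟨x, hmax⟩ := hv.exists_forall_map_sub_sq_le he hns
  obtain ⟨t, ht⟩ := hv.exists_lt_map_sub_sq ha
  have lt_map_sub : v a < v (a - x ^ 2) := ht.trans_le (hmax t)
  have map_eq : v (x ^ 2) = v a := v.map_eq_of_lt_sub (by rwa [v.map_sub_swap])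
  have sq_ne : x ^ 2 ≠ 0 := v.ne_top_iff.1 (map_eq ▸ lt_map_sub.ne_top)
  have one_add : 1 + (a - x ^ 2) / x ^ 2 = a / x ^ 2 := by
    rw [sub_div, div_self sq_ne, add_sub_cancel]
  refine ⟨x, (a - x ^ 2) / x ^ 2, ne_zero_pow two_ne_zero sq_ne, ?_, ?_, fun y ↦ ?_⟩
  · rw [one_add, mul_div_cancel₀ a sq_ne]
  · rwa [lt_map_div_iff sq_ne, zero_add, map_eq]
  · rw [one_add, ← mul_div_cancel_left₀ (y ^ 2) sq_ne, ← mul_pow, ← sub_div]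
    exact map_div_le_map_div_right (hmax _) _

theorem IsDyadicHenselian.odd_of_forall_map_one_add_sub_sq_le (hv : IsDyadicHenselian v) {e m : ℤ}
    (he : v 2 = e) {α : F} (hα : v α = m) (hme : m < 2 * e)
    (hmax : ∀ y, v (1 + α - y ^ 2) ≤ v α) : Odd m := by
  by_contra even
  obtain ⟨k, rfl⟩ := (Int.not_odd_iff_even.1 even).two_dvd
  obtain ⟨t, ht⟩ := hv.exists_lt_map_sub_sq hα
  have map_sq : 2 • v t = v α := by
    rw [← v.map_pow]
    exact v.map_eq_of_lt_sub (by rwa [v.map_sub_swap])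
  obtain ⟨n, hn⟩ := exists_map_eq_coe v (x := t) (by rintro rfl; simp at ht)
  have lt : v α < v (2 * t) := by
    rw [hn, hα, ← WithTop.coe_nsmul, WithTop.coe_inj, nsmul_eq_mul] at map_sq
    rw [v.map_mul, he, hn, hα, ← WithTop.coe_add, WithTop.coe_lt_coe]
    omega
  refine (hmax (1 + t)).not_gt ?_
  rw [show 1 + α - (1 + t) ^ 2 = α - t ^ 2 + -(2 * t) by ring]
  exact v.map_lt_add ht (by rwa [v.map_neg])

theorem isArtinSchreierInert_of_forall_map_sub_sq_le (h4 : (4 : F) ≠ 0) {r : F} (hr : 0 ≤ v r)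
    (hmax : ∀ y, v (1 - 4 * r - y ^ 2) ≤ v 4) : IsArtinSchreierInert v r := by
  intro s hs
  refine le_antisymm ?_ (v.map_le_add (v.map_le_sub ?_ hs) hr)
  · refine not_lt.1 fun h ↦ (hmax (1 - 2 * s)).not_gt ?_
    rw [show 1 - 4 * r - (1 - 2 * s) ^ 2 = (s ^ 2 - s + r) * -4 by ring, v.map_mul, v.map_neg]
    simpa only [zero_add] using WithTop.add_lt_add_right (v.ne_top_iff.2 h4) h
  · rw [v.map_pow]
    exact nsmul_nonneg hs 2

theorem IsDyadicHenselian.cases_of_not_isSquare (hv : IsDyadicHenselian v) {e : ℕ}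
    (he : v 2 = (e : ℤ)) {a : F} (hns : ¬ IsSquare a) :
    (∃ n : ℤ, v a = n ∧ Odd n) ∨
      (∃ (c α : F) (m : ℕ), c ≠ 0 ∧ a = c ^ 2 * (1 + α) ∧ v α = (m : ℤ) ∧ Odd m ∧ m < 2 * e) ∨
      ∃ c r : F, c ≠ 0 ∧ a = c ^ 2 * (1 - 4 * r) ∧ IsArtinSchreierInert v r := by
  have ha : a ≠ 0 := fun h ↦ hns (h ▸ IsSquare.zero)
  obtain ⟨n, hn⟩ := exists_map_eq_coe v ha
  obtain even | odd := n.even_or_odd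
  · right
    obtain ⟨k, rfl⟩ := even.two_dvd
    obtain ⟨c, α, hc, rfl, hα, hmax⟩ := hv.exists_eq_sq_mul_one_add he hns hn
    have map_le : v α ≤ v 4 := not_lt.1 fun h ↦ hns ((IsSquare.sq c).mul (hv.isSquare_one_add h))
    have four_ne := ne_zero_of_map_eq_coe (map_four_eq_coe he)
    obtain eq | lt := map_le.eq_or_lt
    · have quarter : 1 - 4 * -(α / 4) = 1 + α := by
        field_simp
        ring
      refine .inr ⟨c, -(α / 4), hc, by rw [quarter], ?_⟩
      refine isArtinSchreierInert_of_forall_map_sub_sq_le four_ne ?_ (by rwa [quarter, ← eq])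
      rw [v.map_neg]
      exact map_div_nonneg four_ne eq.ge
    · obtain ⟨m, hm⟩ := exists_map_eq_coe v (v.ne_top_iff.1 lt.ne_top)
      lift m to ℕ using WithTop.coe_nonneg.1 (hm ▸ hα.le)
      rw [map_four_eq_coe he, hm, WithTop.coe_lt_coe] at lt
      have hodd := hv.odd_of_forall_map_one_add_sub_sq_le he hm lt hmax
      exact .inl ⟨c, α, m, hc, rfl, hm, mod_cast hodd, mod_cast lt⟩
  · exact .inl ⟨n, hn, odd⟩

end SquareClasses

section Existence

variable {F : Type*} [Field F] {v : AddValuation F (WithTop ℤ)}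

theorem IsDyadicHenselian.exists_unit_of_odd (hv : IsDyadicHenselian v) {e : ℕ}
    (he : v 2 = (e : ℤ)) {a : F} {n : ℤ} (ha : v a = n) (hn : Odd n) :
    ∃ b : F, v b = 0 ∧ ddefect v b = 2 * e - ddefect v a ∧ hilbertSym F a b = -1 := by
  obtain ⟨ρ, hρ⟩ := hv.inert
  refine ⟨1 - 4 * ρ, hρ.map_one_sub_four_mul, ?_,
    hρ.hilbertSym_one_sub_four_mul (ne_zero_of_map_eq_coe he) ha hn⟩
  rw [hρ.ddefect_one_sub_four_mul he, ddefect_eq_zero_of_odd ha hn, tsub_zero]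

theorem IsDyadicHenselian.exists_unit_of_one_add (hv : IsDyadicHenselian v) {e : ℕ}
    (he : v 2 = (e : ℤ)) {α : F} {m : ℕ} (hα : v α = (m : ℤ)) (hm : Odd m) (hme : m < 2 * e) :
    ∃ b : F, v b = 0 ∧ ddefect v b = 2 * e - ddefect v (1 + α) ∧
      hilbertSym F (1 + α) b = -1 := by
  obtain ⟨ρ, hρ⟩ := hv.inert
  obtain ⟨β, hαβ⟩ : ∃ β, α * β = 4 * ρ := ⟨_, mul_div_cancel₀ (4 * ρ) (ne_zero_of_map_eq_coe hα)⟩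
  obtain ⟨n, hmn⟩ := Nat.exists_eq_add_of_lt hme
  have hβ : v β = ((n + 1 : ℕ) : ℤ) := by
    have map_eq := congr(v $hαβ)
    rw [v.map_mul, v.map_mul, hα, map_four_eq_coe he, hρ.map_eq_zero, add_zero] at map_eq
    refine (WithTop.add_left_inj (WithTop.coe_ne_top (a := (m : ℤ)))).1 (map_eq.trans ?_)
    rw [← WithTop.coe_add, WithTop.coe_inj]
    omega
  have odd : Odd (n + 1) := by grind
  have lt : n + 1 < 2 * e := by have := hm.pos; omega
  refine ⟨1 + β, map_one_add_of_pos (hβ ▸ mod_cast odd.pos), ?_,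
    hρ.hilbertSym_one_add_one_add he hαβ hβ (mod_cast odd) (mod_cast odd.pos) (mod_cast lt)⟩
  rw [ddefect_one_add he hβ odd (mod_cast lt), ddefect_one_add he hα hm (mod_cast hme)]
  norm_cast
  omega

theorem IsDyadicHenselian.exists_of_isArtinSchreierInert (hv : IsDyadicHenselian v) {e : ℕ}
    (he : v 2 = (e : ℤ)) {r : F} (hr : IsArtinSchreierInert v r) :
    ∃ b : F, b ≠ 0 ∧ ddefect v b = 2 * e - ddefect v (1 - 4 * r) ∧
      hilbertSym F (1 - 4 * r) b = -1 := by
  obtain ⟨b, hb⟩ := hv.surj 1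
  refine ⟨b, ne_zero_of_map_eq_coe hb, ?_, ?_⟩
  · rw [ddefect_eq_zero_of_odd hb odd_one, hr.ddefect_one_sub_four_mul he, tsub_self]
  · rw [hilbertSym_comm]
    exact hr.hilbertSym_one_sub_four_mul (ne_zero_of_map_eq_coe he) hb odd_one

end Existence

theorem stmt4_general {F : Type*} [Field F] (v : AddValuation F (WithTop ℤ))
    (hv : IsDyadicHenselian v) (e : ℕ) (he : v 2 = ((e : ℤ) : WithTop ℤ))
    (a : F) (hns : ¬ ∃ c : F, a = c ^ 2) :
    (∃ b : F, b ≠ 0 ∧ ddefect v b = (2 * e : ℕ∞) - ddefect v a ∧ hilbertSym F a b = -1) ∧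
    (ddefect v a < (2 * e : ℕ∞) →
      ∃ b : F, v b = 0 ∧ ddefect v b = (2 * e : ℕ∞) - ddefect v a ∧ hilbertSym F a b = -1) := by
  rw [← isSquare_iff_exists_sq] at hns
  suffices h : (∃ b : F, v b = 0 ∧ ddefect v b = 2 * e - ddefect v a ∧ hilbertSym F a b = -1) ∨
      (ddefect v a = 2 * e ∧
        ∃ b : F, b ≠ 0 ∧ ddefect v b = 2 * e - ddefect v a ∧ hilbertSym F a b = -1) by
    obtain h | ⟨heq, h⟩ := h
    · exact ⟨h.imp fun b ⟨hb, h⟩ ↦ ⟨ne_zero_of_map_eq_coe (n := 0) hb, h⟩, fun _ ↦ h⟩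
    · exact ⟨h, fun hlt ↦ absurd heq hlt.ne⟩
  obtain ⟨n, hn, odd⟩ | ⟨c, α, m, hc, rfl, hα, hm, hme⟩ | ⟨c, r, hc, rfl, hr⟩ :=
    hv.cases_of_not_isSquare he hns
  · exact .inl (hv.exists_unit_of_odd he hn odd)
  · obtain ⟨b, hb, hd, hs⟩ := hv.exists_unit_of_one_add he hα hm hme
    rw [ddefect_sq_mul v hc]
    exact .inl ⟨b, hb, hd, hilbertSym_sq_mul_eq_neg_one hc hs⟩
  · obtain ⟨b, hb, hd, hs⟩ := hv.exists_of_isArtinSchreierInert he hr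
    rw [ddefect_sq_mul v hc]
    exact .inr ⟨hr.ddefect_one_sub_four_mul he, b, hb, hd, hilbertSym_sq_mul_eq_neg_one hc hs⟩

section LocalField

open ValuativeRel IsLocalRing

variable {K : Type*} [Field K] [ValuativeRel K] (v : AddValuation K (WithTop ℤ))
  [v.toValuation.Compatible]

theorem mem_integer_iff_map_nonneg {x : K} : x ∈ 𝒪[K] ↔ 0 ≤ v x :=
  (ValuativeRel.isEquiv (valuation K) v.toValuation).le_one_iff_le_one

theorem mem_maximalIdeal_iff_map_pos {x : 𝒪[K]} : x ∈ 𝓂[K] ↔ 0 < v (x : K) := by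
  rw [mem_maximalIdeal, mem_nonunits_iff, Valuation.Integer.not_isUnit_iff_valuation_lt_one]
  exact (ValuativeRel.isEquiv (valuation K) v.toValuation).lt_one_iff_lt_one

theorem residue_eq_zero_iff_map_pos {x : 𝒪[K]} : residue 𝒪[K] x = 0 ↔ 0 < v (x : K) := by
  rw [residue_eq_zero_iff, mem_maximalIdeal_iff_map_pos v]

variable [TopologicalSpace K] [IsNonarchimedeanLocalField K]

open Polynomial in
theorem exists_sq_sub_self_add_eq_zero {r : K} (hr : 0 < v r) : ∃ s, s ^ 2 - s + r = 0 := by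
  let := IsTopologicalAddGroup.rightUniformSpace K
  have := isUniformAddGroup_of_addCommGroup (G := K)
  have := IsAdicComplete.henselianRing 𝒪[K] 𝓂[K]
  let r' : 𝒪[K] := ⟨r, (mem_integer_iff_map_nonneg v).2 hr.le⟩
  obtain ⟨s, hs, -⟩ := HenselianRing.is_henselian (I := 𝓂[K]) (X ^ 2 - X + C r') (by monicity!) 0
    (by simpa using (mem_maximalIdeal_iff_map_pos v).2 hr) (by simp)
  exact ⟨s, by simpa [IsRoot, r'] using congr(($hs : K))⟩

theorem residueField_charP_two (h2 : 0 < v 2) : CharP 𝓀[K] 2 := by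
  refine CharTwo.of_one_ne_zero_of_two_eq_zero one_ne_zero ?_
  rw [← map_ofNat (residue 𝒪[K]) 2, residue_eq_zero_iff_map_pos v]
  exact h2

theorem exists_map_sub_sq_pos (h2 : 0 < v 2) {u : K} (hu : 0 ≤ v u) : ∃ c, 0 < v (u - c ^ 2) := by
  lift u to 𝒪[K] using (mem_integer_iff_map_nonneg v).2 hu
  have := residueField_charP_two v h2
  obtain ⟨c, hc⟩ := FiniteField.isSquare_of_char_two (ringChar.eq 𝓀[K] 2) (residue 𝒪[K] u)
  obtain ⟨c, rfl⟩ := residue_surjective c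
  refine ⟨c, (residue_eq_zero_iff_map_pos v (x := u - c ^ 2)).1 ?_⟩
  rw [map_sub, hc, map_pow, sq, sub_self]

theorem exists_isArtinSchreierInert : ∃ ρ, IsArtinSchreierInert v ρ := by
  have not_surj : ¬ Function.Surjective fun k : 𝓀[K] ↦ k - k ^ 2 := fun h ↦
    zero_ne_one (Finite.injective_iff_surjective.2 h (by simp : (0 : 𝓀[K]) - 0 ^ 2 = 1 - 1 ^ 2))
  obtain ⟨r, hr⟩ := not_forall.1 not_surj
  obtain ⟨ρ, rfl⟩ := residue_surjective r
  refine ⟨ρ, fun s hs ↦ ?_⟩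
  let s' : 𝒪[K] := ⟨s, (mem_integer_iff_map_nonneg v).2 hs⟩
  have not_pos : ¬ 0 < v (s ^ 2 - s + ρ : K) := fun h ↦ hr ⟨residue _ s', by
    have := (residue_eq_zero_iff_map_pos v (x := s' ^ 2 - s' + ρ)).2 h
    simp only [map_add, map_sub, map_pow] at this
    linear_combination -this⟩
  exact le_antisymm (not_lt.1 not_pos) ((mem_integer_iff_map_nonneg v).1 (s' ^ 2 - s' + ρ).2)

end LocalField

theorem map_zpow_of_map_eq {K : Type*} [Field K] (v : AddValuation K (WithTop ℤ)) {x : K} {n : ℤ}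
    (hx : v x = n) (k : ℤ) : v (x ^ k) = (k * n : ℤ) := by
  obtain ⟨k, rfl | rfl⟩ := k.eq_nat_or_neg
  · rw [zpow_natCast, v.map_pow, hx, ← WithTop.coe_nsmul, nsmul_eq_mul]
  · rw [zpow_neg, zpow_natCast, v.map_inv, v.map_pow, hx, ← WithTop.coe_nsmul, nsmul_eq_mul,
      ← WithTop.LinearOrderedAddCommGroup.coe_neg, neg_mul]

namespace IsDyadicOrd

variable {F : Type*} [Field F] [Algebra ℚ_[2] F] {ord : F → WithTop ℤ}

theorem map_one (hv : IsDyadicOrd ord) : ord 1 = 0 := by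
  obtain ⟨n, hn⟩ := WithTop.ne_top_iff_exists.1 (hv.ne_top 1 one_ne_zero)
  have h := hv.map_mul 1 1
  rw [mul_one, ← hn] at h
  rw [← hn]
  norm_cast at h ⊢
  omega

/-- `ord` as a bundled additive valuation. -/
def addValuation (hv : IsDyadicOrd ord) : AddValuation F (WithTop ℤ) :=
  AddValuation.of ord hv.map_zero hv.map_one hv.min_le_add hv.map_mul

theorem exists_addValuation_two_eq_coe (hv : IsDyadicOrd ord) : ∃ e : ℤ, hv.addValuation 2 = e :=
  have : CharZero F := charZero_of_injective_algebraMap (algebraMap ℚ_[2] F).injective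
  exists_map_eq_coe _ two_ne_zero

theorem addValuation_algebraMap (hv : IsDyadicOrd ord) {e : ℤ} (he : hv.addValuation 2 = e)
    {q : ℚ_[2]} (hq : q ≠ 0) :
    hv.addValuation (algebraMap ℚ_[2] F q) = (q.valuation * e : ℤ) := by
  have two_ne : (2 : ℚ_[2]) ≠ 0 := two_ne_zero
  set u := q * 2 ^ (-q.valuation) with hu
  have hu_val : u.valuation = 0 := by
    have val_two : (2 : ℚ_[2]).valuation = 1 := Padic.valuation_p (p := 2)
    rw [hu, Padic.valuation_mul hq (zpow_ne_zero _ two_ne), Padic.valuation_zpow, val_two]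
    ring
  have map_u : hv.addValuation (algebraMap ℚ_[2] F u) = 0 :=
    hv.compat u (mul_ne_zero hq (zpow_ne_zero _ two_ne)) hu_val
  have q_eq : q = u * 2 ^ q.valuation := by
    rw [hu, mul_assoc, ← zpow_add₀ two_ne, neg_add_cancel, zpow_zero, mul_one]
  conv_lhs => rw [q_eq]
  rw [_root_.map_mul, map_zpow₀, map_ofNat, AddValuation.map_mul, map_u, zero_add,
    map_zpow_of_map_eq _ he]

theorem addValuation_two_pos [FiniteDimensional ℚ_[2] F] (hv : IsDyadicOrd ord) :
    0 < hv.addValuation 2 := by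
  obtain ⟨e, he⟩ := hv.exists_addValuation_two_eq_coe
  have e_nonneg : 0 ≤ e := by
    have h := map_two_nonneg hv.addValuation
    rw [he] at h
    exact_mod_cast h
  refine he ▸ WithTop.coe_pos.2 (e_nonneg.lt_of_ne' fun he0 ↦ ?_)
  let w := hv.addValuation.toValuation
  have mem_integer (q : ℚ_[2]) : algebraMap ℚ_[2] F q ∈ w.integer := by
    obtain rfl | hq := eq_or_ne q 0
    · simp only [_root_.map_zero, zero_mem]
    · have h := hv.addValuation_algebraMap he hq
      rw [he0, mul_zero] at h
      exact h.ge
  obtain ⟨x, hx⟩ := hv.surj (-1)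
  have integral : IsIntegral w.integer x :=
    RingHom.IsIntegralElem.of_comp (f := (algebraMap ℚ_[2] F).codRestrict w.integer mem_integer)
      (IsIntegral.of_finite ℚ_[2] x)
  have h : (0 : WithTop ℤ) ≤ ord x := (Valuation.integer.integers w).mem_of_integral integral
  rw [hx] at h
  exact absurd (WithTop.coe_nonneg.1 h) (by decide)

variable [ValuativeRel F] [TopologicalSpace F] [IsValuativeTopology F] [FiniteDimensional ℚ_[2] F]

open ValuativeRel

theorem continuous_algebraMap (hv : IsDyadicOrd ord) [hv.addValuation.toValuation.Compatible] :
    Continuous (algebraMap ℚ_[2] F) := by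
  refine continuous_of_continuousAt_zero _ ?_
  rw [ContinuousAt, _root_.map_zero,
    Metric.nhds_basis_ball.tendsto_iff (IsValuativeTopology.hasBasis_nhds_zero' F)]
  intro γ hγ
  obtain ⟨y, rfl⟩ := valuation_surjective γ
  obtain ⟨n, hn⟩ := exists_map_eq_coe hv.addValuation ((valuation F).ne_zero_iff.1 hγ)
  obtain ⟨e, he⟩ := hv.exists_addValuation_two_eq_coe
  have e_pos : 0 < e := WithTop.coe_pos.1 (he ▸ hv.addValuation_two_pos)
  refine ⟨2 ^ (-|n|), by positivity, fun q hq ↦ ?_⟩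
  refine ((ValuativeRel.isEquiv (valuation F) hv.addValuation.toValuation).lt_iff_lt).2 ?_
  change hv.addValuation y < hv.addValuation (algebraMap ℚ_[2] F q)
  obtain rfl | hq0 := eq_or_ne q 0
  · rw [_root_.map_zero, AddValuation.map_zero, hn]
    exact WithTop.coe_lt_top n
  · have lt_val : |n| < q.valuation := by
      rw [mem_ball_zero_iff, Padic.norm_eq_zpow_neg_valuation hq0] at hq
      exact neg_lt_neg_iff.1 ((zpow_lt_zpow_iff_right₀ one_lt_two).1 hq)
    rw [hv.addValuation_algebraMap he hq0, hn, WithTop.coe_lt_coe]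
    nlinarith [le_abs_self n, abs_nonneg n]

theorem isNonarchimedeanLocalField (hv : IsDyadicOrd ord)
    [hv.addValuation.toValuation.Compatible] : IsNonarchimedeanLocalField F where
  toLocallyCompactSpace :=
    have := continuousSMul_of_algebraMap ℚ_[2] F hv.continuous_algebraMap
    .of_finiteDimensional_of_complete ℚ_[2] F
  toIsNontrivial := by
    rw [isNontrivial_iff_isNontrivial hv.addValuation.toValuation]
    obtain ⟨x, hx⟩ := hv.surj 1
    have ne_top : hv.addValuation x ≠ ⊤ := hx.trans_ne (WithTop.coe_ne_top (a := 1))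
    have ne_zero : hv.addValuation x ≠ 0 := hx.trans_ne (by decide)
    exact ⟨⟨x, ne_top, ne_zero⟩⟩

end IsDyadicOrd

theorem IsDyadicOrd.isDyadicHenselian {F : Type*} [Field F] [Algebra ℚ_[2] F]
    [FiniteDimensional ℚ_[2] F] {ord : F → WithTop ℤ} (hv : IsDyadicOrd ord) :
    IsDyadicHenselian hv.addValuation := by
  let : ValuativeRel F := .ofValuation hv.addValuation.toValuation
  have compatible := Valuation.Compatible.ofValuation hv.addValuation.toValuation
  let := ValuativeRel.topologicalSpace F
  have := hv.isNonarchimedeanLocalField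
  exact
    { surj := hv.surj
      root := fun _ ↦ exists_sq_sub_self_add_eq_zero hv.addValuation
      sqrt := fun _ ↦ exists_map_sub_sq_pos hv.addValuation hv.addValuation_two_pos
      inert := exists_isArtinSchreierInert hv.addValuation }

/-- for a nonsquare `a` there is `b` with `d(b) = 2e - d(a)` and `(a,b)_ℙ = -1`;
if moreover `d(a) < 2e` then `b` can be chosen a unit. -/
theorem stmt4 {F : Type*} [Field F] [Algebra ℚ_[2] F] [FiniteDimensional ℚ_[2] F]
    (ord : F → WithTop ℤ) (hv : IsDyadicOrd ord)
    (e : ℕ) (he : ord (2 : F) = ((e : ℤ) : WithTop ℤ))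
    (a : F) (ha : a ≠ 0) (hns : ¬ ∃ c : F, a = c ^ 2) :
    (∃ b : F, b ≠ 0 ∧ ddefect ord b = (2 * e : ℕ∞) - ddefect ord a ∧
      hilbertSym F a b = -1) ∧
    (ddefect ord a < (2 * e : ℕ∞) →
      ∃ b : F, ord b = 0 ∧ ddefect ord b = (2 * e : ℕ∞) - ddefect ord a ∧
        hilbertSym F a b = -1) :=
  stmt4_general hv.addValuation hv.isDyadicHenselian e he a hns
end
end

section
/- Let $F$ be a dyadic local field with $e = \mathrm{ord}(2)$, and let $a_1, a_2 \in F^\times$ with $\mathrm{ord}(a_1) = 0$ and $\mathrm{ord}(a_2) = -2e$, such that $-a_1 a_2$ has $d(-a_1a_2) \geq 2e$ (i.e. $-a_1a_2 \in (F^\times)^2 \cup \Delta(F^\times)^2$). Then: if $a_1 a_2 \in -(F^\times)^2$ the binary form $[a_1, a_2]$ is isotropic, and if $a_1 a_2 \in -\Delta (F^\times)^2$ then $[a_1, a_2]$ represents exactly the elements of $F^\times$ of even order. -/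
/-! Write `Δ = w² (1 + 4ρ)` with `ρ` integral, which is possible because `d(Δ) = 2e = ord 4`. Since
`(x + y/2)² - (1 + 4ρ) (y/2)² = x² + xy - ρy²`, the form `a₁ [a₁, a₂]` becomes the Artin–Schreier
norm form `x² + xy - ρy²`. That `d(Δ)` is no larger than `2e` means that `z² + z - ρ` has no root
in the residue field, whence `ord (x² + xy - ρy²) = 2 min (ord x) (ord y)` is always even.
Conversely every unit `ε` is a value of the form: the residue field is perfect, so `ε` is congruent
to a square `x²`, and `x² + xy - ρy² = ε` is then solved for `y` by Hensel's lemma. Scaling by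
squares yields all elements of even order. -/

noncomputable section

section NormedField

variable {K : Type*} [NormedField K] [IsUltrametricDist K]

theorem norm_sub_lt_one_of_norm_sq_sub_sq_lt_one (h2 : ‖(2 : K)‖ < 1) {a b : K} (hb : ‖b‖ ≤ 1)
    (h : ‖a ^ 2 - b ^ 2‖ < 1) : ‖a - b‖ < 1 := by
  by_contra! hab
  have hsq : ‖(a - b) ^ 2‖ ≤ max ‖a ^ 2 - b ^ 2‖ ‖2 * b * (a - b)‖ := by
    rw [show (a - b) ^ 2 = a ^ 2 - b ^ 2 + -(2 * b * (a - b)) by ring,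
      ← norm_neg (2 * b * (a - b))]
    exact IsUltrametricDist.norm_add_le_max _ _
  have hcross : ‖2 * b * (a - b)‖ < ‖a - b‖ := by
    rw [norm_mul, norm_mul]
    have : ‖(2 : K)‖ * ‖b‖ < 1 := mul_lt_one_of_nonneg_of_lt_one_left (norm_nonneg _) h2 hb
    nlinarith
  rw [norm_pow] at hsq
  rcases le_max_iff.1 hsq with h' | h' <;> nlinarith

theorem norm_sub_lt_one_of_norm_pow_two_pow_sub_lt_one (h2 : ‖(2 : K)‖ < 1) {a b : K}
    (hb : ‖b‖ ≤ 1) {n : ℕ} (h : ‖a ^ 2 ^ n - b ^ 2 ^ n‖ < 1) : ‖a - b‖ < 1 := by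
  induction n with
  | zero => simpa using h
  | succ n ih =>
    refine ih (norm_sub_lt_one_of_norm_sq_sub_sq_lt_one h2 ?_ ?_)
    · rw [norm_pow]
      exact pow_le_one₀ (norm_nonneg b) hb
    · rwa [← pow_mul, ← pow_mul, ← pow_succ]

/- Frobenius is injective on the residue field and the Frobenius orbit of `ε` takes finitely many
values there, so the orbit is purely periodic. -/
theorem exists_norm_pow_two_pow_succ_sub_lt_one [ProperSpace K] (h2 : ‖(2 : K)‖ < 1) {ε : K}
    (hε : ‖ε‖ ≤ 1) : ∃ k : ℕ, ‖ε ^ 2 ^ (k + 1) - ε‖ < 1 := by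
  obtain ⟨a, -, φ, hφ, hlim⟩ := (isCompact_closedBall (0 : K) 1).tendsto_subseq
    (x := fun n => ε ^ 2 ^ n) fun n => by simpa using pow_le_one₀ (norm_nonneg ε) hε
  obtain ⟨N, hN⟩ := Metric.cauchySeq_iff.1 hlim.cauchySeq 1 one_pos
  have hclose : ‖ε ^ 2 ^ φ (N + 1) - ε ^ 2 ^ φ N‖ < 1 := by
    simpa [dist_eq_norm] using hN (N + 1) N.le_succ N le_rfl
  obtain ⟨k, hk⟩ := Nat.exists_eq_add_of_lt (hφ N.lt_succ_self)
  refine ⟨k, norm_sub_lt_one_of_norm_pow_two_pow_sub_lt_one h2 hε (n := φ N) ?_⟩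
  rwa [← pow_mul, ← pow_add, add_comm (k + 1), ← add_assoc, ← hk]

theorem exists_norm_eq_one_and_norm_sq_sub_lt_one [ProperSpace K] (h2 : ‖(2 : K)‖ < 1) {ε : K}
    (hε : ‖ε‖ = 1) : ∃ x : K, ‖x‖ = 1 ∧ ‖x ^ 2 - ε‖ < 1 := by
  obtain ⟨k, hk⟩ := exists_norm_pow_two_pow_succ_sub_lt_one h2 hε.le
  exact ⟨ε ^ 2 ^ k, by simp [hε], by rwa [← pow_mul, ← pow_succ]⟩

/- Hensel's lemma for a quadratic polynomial whose reduction has the simple root `0`: the root is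
the fixed point of `y ↦ -(a y² + c) / b`, a contraction of the ball of radius `‖c‖`. -/
theorem exists_quadratic_eq_zero_of_norm_lt_one [CompleteSpace K] {a b c : K} (ha : ‖a‖ ≤ 1)
    (hb : ‖b‖ = 1) (hc : ‖c‖ < 1) : ∃ y : K, a * y ^ 2 + b * y + c = 0 := by
  have hb0 : b ≠ 0 := norm_ne_zero_iff.1 (hb ▸ one_ne_zero)
  let T : K → K := fun y => -(a * y ^ 2 + c) / b
  have hmaps : Set.MapsTo T (Metric.closedBall 0 ‖c‖) (Metric.closedBall 0 ‖c‖) := by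
    intro y hy
    rw [mem_closedBall_zero_iff] at hy ⊢
    have hay : ‖a * y ^ 2‖ ≤ ‖c‖ :=
      calc ‖a * y ^ 2‖ = ‖a‖ * ‖y‖ ^ 2 := by rw [norm_mul, norm_pow]
        _ ≤ 1 * ‖c‖ ^ 2 := by gcongr
        _ ≤ ‖c‖ := by nlinarith [norm_nonneg c]
    calc ‖T y‖ = ‖a * y ^ 2 + c‖ := by rw [norm_div, norm_neg, hb, div_one]
      _ ≤ ‖c‖ := (IsUltrametricDist.norm_add_le_max _ _).trans (max_le hay le_rfl)
  have hcontr : ContractingWith ‖c‖₊ (hmaps.restrict T _ _) := by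
    refine ⟨hc, LipschitzWith.of_dist_le_mul ?_⟩
    rintro ⟨y, hy⟩ ⟨z, hz⟩
    rw [mem_closedBall_zero_iff] at hy hz
    have hT : T y - T z = -(a * (y + z) * (y - z)) / b := by
      simp only [T]
      ring
    change dist (T y) (T z) ≤ ‖c‖ * dist y z
    calc dist (T y) (T z) = ‖a‖ * ‖y + z‖ * dist y z := by
          rw [dist_eq_norm, dist_eq_norm, hT, norm_div, norm_neg, norm_mul, norm_mul, hb, div_one]
      _ ≤ 1 * ‖c‖ * dist y z := by
          gcongr
          exact (IsUltrametricDist.norm_add_le_max _ _).trans (max_le hy hz)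
      _ = ‖c‖ * dist y z := by rw [one_mul]
  obtain ⟨y, -, hy, -⟩ := hcontr.exists_fixedPoint' Metric.isClosed_closedBall.isComplete hmaps
    (x := 0) (by simp) (edist_ne_top _ _)
  have hfix : -(a * y ^ 2 + c) / b = y := hy
  rw [div_eq_iff hb0] at hfix
  exact ⟨y, by linear_combination -hfix⟩

theorem exists_sq_add_mul_sub_mul_sq_eq_of_norm_eq_one [ProperSpace K] (h2 : ‖(2 : K)‖ < 1)
    {ρ ε : K} (hρ : ‖ρ‖ ≤ 1) (hε : ‖ε‖ = 1) : ∃ x y : K, x ^ 2 + x * y - ρ * y ^ 2 = ε := by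
  obtain ⟨x, hx, hxε⟩ := exists_norm_eq_one_and_norm_sq_sub_lt_one h2 hε
  obtain ⟨y, hy⟩ := exists_quadratic_eq_zero_of_norm_lt_one (a := -ρ) (by rwa [norm_neg]) hx hxε
  exact ⟨x, y, by linear_combination hy⟩

end NormedField

section NegExp

/-- The order-reversing map `z ↦ r ^ (-z)` from `ℤ ∪ {∞}` to `ℝ`, with `∞ ↦ 0`; it turns an
additive valuation into an absolute value. -/
def negExp (r : ℝ) : WithTop ℤ → ℝ
  | ⊤ => 0
  | (n : ℤ) => r ^ (-n)

variable {r : ℝ}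

theorem negExp_coe (n : ℤ) : negExp r n = r ^ (-n) := rfl

theorem negExp_add (hr : r ≠ 0) (a b : WithTop ℤ) :
    negExp r (a + b) = negExp r a * negExp r b := by
  cases a with
  | top => simp [negExp]
  | coe m =>
    cases b with
    | top => simp [negExp]
    | coe n => rw [← WithTop.coe_add, negExp_coe, negExp_coe, negExp_coe, neg_add, zpow_add₀ hr]

theorem negExp_strictAnti (hr : 1 < r) : StrictAnti (negExp r) := by
  intro a b hab
  lift a to ℤ using hab.ne_top
  cases b with
  | top => exact zpow_pos (by positivity) _
  | coe n => exact zpow_lt_zpow_right₀ hr (neg_lt_neg (WithTop.coe_lt_coe.1 hab))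

theorem negExp_nonneg (hr : 1 < r) (a : WithTop ℤ) : 0 ≤ negExp r a :=
  (negExp_strictAnti hr).antitone le_top

/-- The absolute value `x ↦ r ^ (-v x)` attached to a `ℤ`-valued additive valuation `v`. -/
def absoluteValueOfAddValuation {K : Type*} [Field K] (v : AddValuation K (WithTop ℤ))
    (hr : 1 < r) : AbsoluteValue K ℝ where
  toFun x := negExp r (v x)
  map_mul' x y := by rw [v.map_mul, negExp_add (by positivity)]
  nonneg' x := negExp_nonneg hr _
  eq_zero' x := (negExp_strictAnti hr).injective.eq_iff' rfl |>.trans v.top_iff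
  add_le' x y := by
    have hmax := (negExp_strictAnti hr).antitone (v.map_add x y)
    rw [(negExp_strictAnti hr).antitone.map_min] at hmax
    exact hmax.trans (max_le_add_of_nonneg (negExp_nonneg hr _) (negExp_nonneg hr _))

end NegExp

section AddValuation

variable {K Γ₀ : Type*} [Field K] [LinearOrderedAddCommGroupWithTop Γ₀]

theorem map_inv_mul_eq_zero_of_pos (v : AddValuation K Γ₀) {a b : K} (ha : a ≠ 0)
    (h : 0 < v (a⁻¹ * (a - b))) : v (a⁻¹ * b) = 0 := by
  rw [mul_sub, inv_mul_cancel₀ ha, v.map_sub_swap, ← v.map_one] at h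
  rw [v.map_eq_of_lt_sub h, v.map_one]

theorem map_sq_add_mul_sub_mul_sq (v : AddValuation K Γ₀) {ρ : K} (hρ : 0 ≤ v ρ)
    (hroot : ∀ z, v (z ^ 2 + z - ρ) ≤ 0) (x y : K) :
    v (x ^ 2 + x * y - ρ * y ^ 2) = 2 • min (v x) (v y) := by
  rcases lt_or_ge (v x) (v y) with hxy | hyx
  · have hlt : v x + v x < v x + v y := (add_lt_add_iff_right_of_ne_top hxy.ne_top).2 hxy
    have hmul : v (x ^ 2) < v (x * y) := by rwa [v.map_pow, two_nsmul, v.map_mul]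
    have hsq : v (x ^ 2) < v (ρ * y ^ 2) := by
      rw [v.map_pow, v.map_mul, v.map_pow, two_nsmul, two_nsmul]
      exact hlt.trans_le ((add_le_add_left hxy.le _).trans (le_add_of_nonneg_left hρ))
    rw [add_sub_assoc, v.map_add_eq_of_lt_left (lt_of_lt_of_le (lt_min hmul hsq) (v.map_sub _ _)),
      v.map_pow, min_eq_left hxy.le]
  · rw [min_eq_right hyx]
    rcases eq_or_ne y 0 with rfl | hy
    · obtain rfl : x = 0 := v.top_iff.1 (top_le_iff.1 (v.map_zero ▸ hyx))
      simp [two_nsmul]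
    obtain ⟨z, rfl⟩ : ∃ z, x = z * y := ⟨x / y, (div_mul_cancel₀ x hy).symm⟩
    have hz : 0 ≤ v z := by
      rw [v.map_mul] at hyx
      exact (add_le_add_iff_left_of_ne_top (v.ne_top_iff.2 hy)).1 (by rwa [zero_add])
    have hunit : v (z ^ 2 + z - ρ) = 0 := by
      refine (hroot z).antisymm (v.map_le_sub (v.map_le_add ?_ hz) hρ)
      rw [v.map_pow]
      exact nsmul_nonneg hz 2
    rw [show (z * y) ^ 2 + z * y * y - ρ * y ^ 2 = y ^ 2 * (z ^ 2 + z - ρ) by ring, v.map_mul,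
      hunit, add_zero, v.map_pow]

end AddValuation

theorem even_iff_exists_coe_two_mul {z : WithTop ℤ} (hz : z ≠ ⊤) :
    Even z ↔ ∃ k : ℤ, z = ((2 * k : ℤ) : WithTop ℤ) := by
  lift z to ℤ using hz
  refine ⟨?_, ?_⟩
  · rintro ⟨k, hk⟩
    lift k to ℤ using (by rintro rfl; simp at hk)
    exact ⟨k, by rw [hk, two_mul, WithTop.coe_add]⟩
  · rintro ⟨k, hk⟩
    exact ⟨k, by rw [hk, two_mul, WithTop.coe_add]⟩

section Defect

variable {K : Type*} [Field K]

theorem map_toNat_le_natCast_iff {z : WithTop ℤ} {n : ℕ} :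
    WithTop.map Int.toNat z ≤ (n : ℕ∞) ↔ z ≤ ((n : ℤ) : WithTop ℤ) := by
  cases z with
  | top => exact iff_of_false (ENat.natCast_lt_top n).not_ge (WithTop.coe_lt_top _).not_ge
  | coe m =>
    rw [WithTop.coe_le_coe, ← Int.toNat_le]
    exact Nat.cast_le

theorem ddefect_le_natCast_iff {ord : K → WithTop ℤ} {a : K} {n : ℕ} :
    ddefect ord a ≤ n ↔ ∀ x, ord (a⁻¹ * (a - x ^ 2)) ≤ ((n : ℤ) : WithTop ℤ) := by
  simp only [← map_toNat_le_natCast_iff]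
  exact iSup_le_iff

theorem natCast_le_ddefect_iff {ord : K → WithTop ℤ} {a : K} {n : ℕ} (hn : n ≠ 0) :
    n ≤ ddefect ord a ↔ ∃ x, ((n : ℤ) : WithTop ℤ) ≤ ord (a⁻¹ * (a - x ^ 2)) := by
  obtain ⟨m, rfl⟩ := Nat.exists_eq_succ_of_ne_zero hn
  have hsucc (z : WithTop ℤ) :
      (((m + 1 : ℕ) : ℤ) : WithTop ℤ) ≤ z ↔ ((m : ℤ) : WithTop ℤ) < z := by
    cases z with
    | top => simp
    | coe k => rw [WithTop.coe_le_coe, WithTop.coe_lt_coe, Nat.cast_succ, Int.add_one_le_iff]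
  simp only [hsucc]
  rw [Nat.cast_succ, ENat.add_one_le_iff (ENat.natCast_ne_top m)]
  simpa only [not_le, not_forall] using (ddefect_le_natCast_iff (ord := ord) (a := a)).not

/- Take for `w²` a best square approximation of `Δ`. Replacing `w` by `w (1 + 2z)` replaces the
error `4ρw²` by `4(ρ - z² - z)w²`, so no residual root of `z² + z - ρ` can exist. -/
theorem exists_eq_sq_mul_one_add_four_mul (v : AddValuation K (WithTop ℤ)) {e : ℕ} (he0 : 0 < e)
    (he : v 2 = ((e : ℤ) : WithTop ℤ)) {Δ : K} (hΔ : ddefect v Δ = (2 * e : ℕ∞)) :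
    ∃ w ρ : K, w ≠ 0 ∧ Δ = w ^ 2 * (1 + 4 * ρ) ∧ 0 ≤ v ρ ∧ ∀ z, v (z ^ 2 + z - ρ) ≤ 0 := by
  have hΔ' : ddefect v Δ = (2 * e : ℕ) := by rw [hΔ, Nat.cast_mul, Nat.cast_ofNat]
  obtain ⟨w, hw⟩ := (natCast_le_ddefect_iff (by positivity)).1 hΔ'.ge
  have hΔ0 : Δ ≠ 0 := by
    rintro rfl
    have htop := ddefect_le_natCast_iff.1 hΔ'.le 0
    rw [inv_zero, zero_mul, v.map_zero] at htop
    exact (WithTop.coe_lt_top _).not_ge htop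
  have h4 : v 4 = ((2 * e : ℕ) : ℤ) := by
    rw [show (4 : K) = 2 ^ 2 by norm_num, v.map_pow, he, two_nsmul, ← WithTop.coe_add, two_mul,
      Nat.cast_add]
  have hfour : (4 : K) ≠ 0 := v.ne_top_iff.1 (h4 ▸ WithTop.coe_ne_top)
  have hwΔ : v (Δ⁻¹ * w ^ 2) = 0 :=
    map_inv_mul_eq_zero_of_pos v hΔ0 (lt_of_lt_of_le (WithTop.coe_lt_coe.2 (by positivity)) hw)
  have hw0 : w ≠ 0 := by
    rintro rfl
    simp at hwΔ
  obtain ⟨ρ, hρ⟩ : ∃ ρ, Δ = w ^ 2 * (1 + 4 * ρ) :=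
    ⟨(Δ / w ^ 2 - 1) / 4, by
      field_simp
      ring⟩
  have key (z : K) : v (Δ⁻¹ * (Δ - (w * (1 + 2 * z)) ^ 2)) =
      ((2 * e : ℕ) : ℤ) + v (z ^ 2 + z - ρ) := by
    rw [show Δ⁻¹ * (Δ - (w * (1 + 2 * z)) ^ 2) = Δ⁻¹ * w ^ 2 * 4 * (-(z ^ 2 + z - ρ)) by
      linear_combination Δ⁻¹ * hρ, v.map_mul, v.map_mul, v.map_neg, hwΔ, h4, zero_add]
  refine ⟨w, ρ, hw0, hρ, ?_, fun z => ?_⟩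
  · have hρ0 : v (Δ⁻¹ * (Δ - w ^ 2)) = ((2 * e : ℕ) : ℤ) + v ρ := by
      simpa [v.map_neg] using key 0
    rw [hρ0] at hw
    exact (add_le_add_iff_right_of_ne_top WithTop.coe_ne_top).1 (by rwa [add_zero])
  · have hz := ddefect_le_natCast_iff.1 hΔ'.le (w * (1 + 2 * z))
    rw [key] at hz
    exact (add_le_add_iff_right_of_ne_top WithTop.coe_ne_top).1 (by rwa [add_zero])

end Defect

namespace IsDyadicOrd

variable {F : Type*} [Field F] [Algebra ℚ_[2] F] {ord : F → WithTop ℤ}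

theorem ord_two_ne_top (hv : IsDyadicOrd ord) : ord 2 ≠ ⊤ := by
  have : CharZero F := charZero_of_injective_algebraMap (algebraMap ℚ_[2] F).injective
  exact hv.ne_top 2 two_ne_zero

theorem ord_algebraMap (hv : IsDyadicOrd ord) {q : ℚ_[2]} (hq : q ≠ 0) :
    ord (algebraMap ℚ_[2] F q) = q.valuation • ord 2 := by
  have h2 : (2 : ℚ_[2]) ^ q.valuation ≠ 0 := zpow_ne_zero _ two_ne_zero
  have hunit : ord (algebraMap ℚ_[2] F (q / 2 ^ q.valuation)) = 0 := by
    refine hv.compat _ (div_ne_zero hq h2) ?_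
    have hval : (2 : ℚ_[2]).valuation = 1 := mod_cast Padic.valuation_p (p := 2)
    rw [div_eq_mul_inv, Padic.valuation_mul hq (inv_ne_zero h2), Padic.valuation_inv,
      Padic.valuation_zpow, hval]
    ring
  calc ord (algebraMap ℚ_[2] F q)
      = ord (algebraMap ℚ_[2] F (q / 2 ^ q.valuation) * 2 ^ q.valuation) := by
        rw [← map_ofNat (algebraMap ℚ_[2] F), ← map_zpow₀, ← _root_.map_mul, div_mul_cancel₀ _ h2]
    _ = q.valuation • ord 2 := by
        rw [hv.map_mul, hunit, zero_add]
        exact map_zpow₀ (AddValuation.toValuation hv.addValuation) 2 q.valuation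

/- If `ord 2 = 0`, then `ord` is trivial on `ℚ₂`, hence on every algebraic extension of it. -/
theorem ord_two_pos [Algebra.IsAlgebraic ℚ_[2] F] (hv : IsDyadicOrd ord) : 0 < ord 2 := by
  have hnonneg : 0 ≤ ord 2 := by
    rw [← one_add_one_eq_two, ← hv.map_one]
    exact min_self (ord (1 : F)) ▸ hv.min_le_add 1 1
  refine hnonneg.lt_of_ne' fun h => ?_
  have : (AddValuation.toValuation hv.addValuation).IsTrivialOn ℚ_[2] :=
    ⟨fun q hq => show ord (algebraMap ℚ_[2] F q) = 0 by rw [hv.ord_algebraMap hq, h, smul_zero]⟩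
  obtain ⟨x, hx⟩ := hv.surj 1
  have hx0 : x ≠ 0 := by
    rintro rfl
    simp [hv.map_zero] at hx
  refine (AddValuation.toValuation hv.addValuation).transcendental_of_ne_one ℚ_[2] x hx0 ?_
    (Algebra.IsAlgebraic.isAlgebraic x)
  change ord x ≠ 0
  simp [hx]

theorem exists_negExp_ord_algebraMap_eq_norm [Algebra.IsAlgebraic ℚ_[2] F] (hv : IsDyadicOrd ord) :
    ∃ r : ℝ, 1 < r ∧ ∀ q : ℚ_[2], negExp r (ord (algebraMap ℚ_[2] F q)) = ‖q‖ := by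
  obtain ⟨e, he⟩ := WithTop.ne_top_iff_exists.1 hv.ord_two_ne_top
  have he0 : 0 < e := WithTop.coe_pos.1 (he ▸ hv.ord_two_pos)
  lift e to ℕ using he0.le
  refine ⟨2 ^ (e : ℝ)⁻¹, Real.one_lt_rpow one_lt_two (inv_pos.2 (mod_cast he0)), fun q => ?_⟩
  rcases eq_or_ne q 0 with rfl | hq
  · rw [_root_.map_zero, hv.map_zero, norm_zero]
    rfl
  · have hcoe : q.valuation • ((e : ℤ) : WithTop ℤ) = ((q.valuation * e : ℤ) : WithTop ℤ) :=
      (map_zsmul' WithTop.addHom WithTop.LinearOrderedAddCommGroup.coe_neg (e : ℤ) q.valuation).symm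
    have hroot : ((2 : ℝ) ^ (e : ℝ)⁻¹) ^ e = 2 := Real.rpow_inv_natCast_pow zero_le_two (by lia)
    rw [hv.ord_algebraMap hq, ← he, hcoe, negExp_coe, ← neg_mul, mul_comm,
      zpow_mul, zpow_natCast, hroot, Padic.norm_eq_zpow_neg_valuation hq, Nat.cast_ofNat]

theorem exists_sq_add_mul_sub_mul_sq_eq_of_ord_eq_zero [FiniteDimensional ℚ_[2] F]
    (hv : IsDyadicOrd ord) {ρ ε : F} (hρ : 0 ≤ ord ρ) (hε : ord ε = 0) :
    ∃ x y : F, x ^ 2 + x * y - ρ * y ^ 2 = ε := by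
  obtain ⟨r, hr, hnorm⟩ := hv.exists_negExp_ord_algebraMap_eq_norm
  let _ : NormedField F := (absoluteValueOfAddValuation hv.addValuation hr).toNormedField
  have norm_def (x : F) : ‖x‖ = negExp r (ord x) := rfl
  let _ : NormedAlgebra ℚ_[2] F :=
    { (inferInstance : Algebra ℚ_[2] F) with
      norm_smul_le q x := by rw [Algebra.smul_def, norm_mul, norm_def (algebraMap _ _ q), hnorm] }
  have : ProperSpace F := FiniteDimensional.proper ℚ_[2] F
  have anti := negExp_strictAnti hr
  have hle (x y : F) : ‖x‖ ≤ ‖y‖ ↔ ord y ≤ ord x := anti.le_iff_ge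
  have : IsUltrametricDist F := .isUltrametricDist_of_forall_norm_add_le_max_norm fun x y => by
    simpa only [le_max_iff, hle, ← min_le_iff] using hv.min_le_add x y
  refine exists_sq_add_mul_sub_mul_sq_eq_of_norm_eq_one ?_ ?_ ?_
  · rw [← norm_one (α := F), ← not_le, hle, hv.map_one, not_le]
    exact hv.ord_two_pos
  · rwa [← norm_one (α := F), hle, hv.map_one]
  · rw [norm_def, hε, ← hv.map_one, ← norm_def, norm_one]

theorem exists_sq_add_mul_sub_mul_sq_eq_iff_even [FiniteDimensional ℚ_[2] F]
    (hv : IsDyadicOrd ord) {ρ : F} (hρ : 0 ≤ ord ρ) (hroot : ∀ z, ord (z ^ 2 + z - ρ) ≤ 0)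
    (b : F) : (∃ x y : F, x ^ 2 + x * y - ρ * y ^ 2 = b) ↔ Even (ord b) := by
  refine ⟨?_, fun hb => ?_⟩
  · rintro ⟨x, y, rfl⟩
    exact ⟨_, (map_sq_add_mul_sub_mul_sq hv.addValuation hρ hroot x y).trans (two_nsmul _)⟩
  rcases eq_or_ne b 0 with rfl | hb0
  · exact ⟨0, 0, by simp⟩
  obtain ⟨k, hk⟩ := (even_iff_exists_coe_two_mul (hv.ne_top b hb0)).1 hb
  obtain ⟨p, hp⟩ := hv.surj (-k)
  have hp0 : p ≠ 0 := by
    rintro rfl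
    exact WithTop.top_ne_coe (hv.map_zero.symm.trans hp)
  have hunit : ord (p ^ 2 * b) = 0 := by
    rw [hv.map_mul, sq, hv.map_mul, hp, hk, ← WithTop.coe_add, ← WithTop.coe_add]
    exact WithTop.coe_eq_zero.2 (by ring)
  obtain ⟨x, y, hxy⟩ := hv.exists_sq_add_mul_sub_mul_sq_eq_of_ord_eq_zero hρ hunit
  refine ⟨x / p, y / p, mul_left_cancel₀ (pow_ne_zero 2 hp0) ?_⟩
  rw [← hxy]
  field_simp

end IsDyadicOrd

theorem exists_mul_sq_add_mul_sq_eq_iff {K : Type*} [Field K] (h2 : (2 : K) ≠ 0)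
    {a₁ a₂ d ρ : K} (h₁ : a₁ ≠ 0) (hd : d ≠ 0) (h : a₁ * a₂ = -(d ^ 2 * (1 + 4 * ρ))) (b : K) :
    (∃ x y : K, a₁ * x ^ 2 + a₂ * y ^ 2 = b) ↔
      ∃ x y : K, x ^ 2 + x * y - ρ * y ^ 2 = a₁ * b := by
  refine ⟨?_, ?_⟩
  · rintro ⟨x, y, rfl⟩
    exact ⟨a₁ * x - d * y, 2 * d * y, by linear_combination -y ^ 2 * h⟩
  · rintro ⟨x, y, hxy⟩
    refine ⟨(x + y / 2) / a₁, y / (2 * d), mul_left_cancel₀ h₁ ?_⟩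
    rw [← hxy]
    field_simp
    linear_combination y ^ 2 * h

theorem stmt8_general {F : Type*} [Field F] [Algebra ℚ_[2] F] [FiniteDimensional ℚ_[2] F]
    (ord : F → WithTop ℤ) (hv : IsDyadicOrd ord)
    (e : ℕ) (he : ord (2 : F) = ((e : ℤ) : WithTop ℤ))
    (Δ : F) (hΔd : ddefect ord Δ = (2 * e : ℕ∞)) (a₁ a₂ : F) (h₁ : a₁ ≠ 0) :
    ((∃ c : F, a₁ * a₂ = -(c ^ 2)) →
      ∃ x y : F, (x, y) ≠ (0, 0) ∧ a₁ * x ^ 2 + a₂ * y ^ 2 = 0) ∧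
    ((∃ c : F, c ≠ 0 ∧ a₁ * a₂ = -(Δ * c ^ 2)) →
      ∀ b : F, b ≠ 0 →
        ((∃ x y : F, a₁ * x ^ 2 + a₂ * y ^ 2 = b) ↔
          ∃ k : ℤ, ord (a₁ * b) = ((2 * k : ℤ) : WithTop ℤ))) := by
  refine ⟨?_, ?_⟩
  · rintro ⟨c, hc⟩
    exact ⟨c, a₁, by simp [h₁], by linear_combination a₁ * hc⟩
  · rintro ⟨c, hc0, hc⟩ b hb
    have he0 : 0 < e := by exact_mod_cast he ▸ hv.ord_two_pos
    have h2 : (2 : F) ≠ 0 := hv.addValuation.ne_top_iff.1 hv.ord_two_ne_top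
    obtain ⟨w, ρ, hw0, hΔ, hρ, hroot⟩ :=
      exists_eq_sq_mul_one_add_four_mul hv.addValuation he0 he hΔd
    have hd : a₁ * a₂ = -((w * c) ^ 2 * (1 + 4 * ρ)) := by rw [hc, hΔ]; ring
    rw [exists_mul_sq_add_mul_sq_eq_iff h2 h₁ (mul_ne_zero hw0 hc0) hd,
      hv.exists_sq_add_mul_sub_mul_sq_eq_iff_even hρ hroot,
      even_iff_exists_coe_two_mul (hv.ne_top _ (mul_ne_zero h₁ hb))]

/-- if `ord a₁ = 0`, `ord a₂ = -2e` and `d(-a₁a₂) ≥ 2e`, then: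
if `a₁a₂ ∈ -(Fˣ)²` the form `[a₁,a₂]` is isotropic, and if `a₁a₂ ∈ -Δ(Fˣ)²`
then `[a₁,a₂]` represents exactly the elements of even order. -/
theorem stmt8 {F : Type*} [Field F] [Algebra ℚ_[2] F] [FiniteDimensional ℚ_[2] F]
    (ord : F → WithTop ℤ) (hv : IsDyadicOrd ord)
    (e : ℕ) (he : ord (2 : F) = ((e : ℤ) : WithTop ℤ))
    (Δ : F) (hΔu : ord Δ = 0) (hΔd : ddefect ord Δ = (2 * e : ℕ∞))
    (a₁ a₂ : F) (h₁ : a₁ ≠ 0) (h₂ : a₂ ≠ 0)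
    (hR₁ : ord a₁ = 0) (hR₂ : ord a₂ = ((-(2 * (e : ℤ)) : ℤ) : WithTop ℤ))
    (hd : (2 * e : ℕ∞) ≤ ddefect ord (-(a₁ * a₂))) :
    ((∃ c : F, a₁ * a₂ = -(c ^ 2)) →
      ∃ x y : F, (x, y) ≠ (0, 0) ∧ a₁ * x ^ 2 + a₂ * y ^ 2 = 0) ∧
    ((∃ c : F, c ≠ 0 ∧ a₁ * a₂ = -(Δ * c ^ 2)) →
      ∀ b : F, b ≠ 0 →
        ((∃ x y : F, a₁ * x ^ 2 + a₂ * y ^ 2 = b) ↔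
          ∃ k : ℤ, ord b = ((2 * k : ℤ) : WithTop ℤ))) := by
  simpa only [hv.map_mul, hR₁, zero_add] using stmt8_general ord hv e he Δ hΔd a₁ a₂ h₁
end
end
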